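/- Let R be a basic left Harada algebra with modules P_{ij} := rad^{j-1}(e_{i1}R) as below, let I be the two-sided ideal I := ⊕_{i,j} rad^{n_i-j+1}(e_{ij}R), and set R̄ := R/I. For fixed i and indices 1 ≤ k < l ≤ n_i and 1 ≤ j ≤ n_i, the following are equivalent: (a) Ext^1_R(P_{ik}/P_{il}, P_{ij}) = 0; (b) j ≤ k or l < j; (c) Ext^1_{R̄}(P_{ik}/P_{il}, P_{ij}/rad(P_{i n_i})) = 0, where P_{ik}/P_{il} and P_{ij}/rad(P_{i n_i}) are regarded as right R̄-modules. -/

import Mathlib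

/-!
Common setup.  `K` is an algebraically closed field and `R` a finite-dimensional associative
unital `K`-algebra.  Right `R`-modules are formalized as modules over the opposite ring `Rᵐᵒᵖ`
(so that `MulOpposite.op r • x = x * r`).
-/

open MulOpposite

/-- The right ideal `xR` of a ring `R`, as a submodule of `R` over `Rᵐᵒᵖ`. -/
def rightIdeal (R : Type) [Ring R] (x : R) : Submodule Rᵐᵒᵖ R :=
  Submodule.span Rᵐᵒᵖ {x}

/-- The Jacobson radical of a submodule `N` (the intersection of the maximal submodules of the
module `N`), viewed as a submodule of the ambient module.  Iterating this operation gives the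
iterated radicals `rad^k`. -/
def radSub {A M : Type} [Ring A] [AddCommGroup M] [Module A M] (N : Submodule A M) :
    Submodule A M :=
  Submodule.map N.subtype (sInf {P : Submodule A ↥N | IsCoatom P})

/-- A module is indecomposable if it is nonzero and admits no nontrivial direct sum
decomposition. -/
def IsIndecomposableMod (A M : Type) [Ring A] [AddCommGroup M] [Module A M] : Prop :=
  Nontrivial M ∧ ∀ N N' : Submodule A M, IsCompl N N' → N = ⊥ ∨ N' = ⊥

/-- A module has projective dimension at most one iff it admits a surjection from a projective
module with projective kernel. -/
def PdLeOne (A : Type) [Ring A] (M : Type) [AddCommGroup M] [Module A M] : Prop :=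
  ∃ (P : ModuleCat.{0} A) (f : ↥P →ₗ[A] M),
    Module.Projective A ↥P ∧ Function.Surjective f ∧
      Module.Projective A ↥(LinearMap.ker f)

/-- `Ext¹_A(M,N) = 0`, expressed by the splitting of every short exact sequence
`0 → N → E → M → 0`. -/
def Ext1Zero (A : Type) [Ring A] (M N : Type) [AddCommGroup M] [Module A M]
    [AddCommGroup N] [Module A N] : Prop :=
  ∀ (E : ModuleCat.{0} A) (i : N →ₗ[A] ↥E) (p : ↥E →ₗ[A] M),
    Function.Injective i → Function.Surjective p → LinearMap.range i = LinearMap.ker p →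
    ∃ s : M →ₗ[A] ↥E, p.comp s = LinearMap.id

/-- `X ∈ add T` : `X` is a direct summand of a finite direct sum of copies of `T`. -/
def InAdd (A : Type) [Ring A] (T X : Type) [AddCommGroup T] [Module A T]
    [AddCommGroup X] [Module A X] : Prop :=
  ∃ (k : ℕ) (f : X →ₗ[A] (Fin k → T)) (g : (Fin k → T) →ₗ[A] X),
    g.comp f = LinearMap.id

/-- `T` is a (finitely generated) tilting right `R`-module: projective dimension at most one,
no self-extensions, and there is a short exact sequence `0 → R → T₀ → T₁ → 0` with
`T₀, T₁ ∈ add T`. -/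
def IsTiltingRight (R : Type) [Ring R] (T : Type) [AddCommGroup T] [Module Rᵐᵒᵖ T] : Prop :=
  Module.Finite Rᵐᵒᵖ T ∧ PdLeOne Rᵐᵒᵖ T ∧ Ext1Zero Rᵐᵒᵖ T T ∧
    ∃ (T₀ T₁ : ModuleCat.{0} Rᵐᵒᵖ) (f : R →ₗ[Rᵐᵒᵖ] ↥T₀) (g : ↥T₀ →ₗ[Rᵐᵒᵖ] ↥T₁),
      InAdd Rᵐᵒᵖ T ↥T₀ ∧ InAdd Rᵐᵒᵖ T ↥T₁ ∧
        Function.Injective f ∧ Function.Surjective g ∧ LinearMap.range f = LinearMap.ker g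

/-- `T` is basic: it is an (internal) direct sum of pairwise non-isomorphic indecomposable
submodules. -/
def IsBasicMod (A : Type) [Ring A] (T : Type) [AddCommGroup T] [Module A T] : Prop :=
  ∃ (k : ℕ) (N : Fin k → Submodule A T),
    DirectSum.IsInternal N ∧ (∀ a, IsIndecomposableMod A ↥(N a)) ∧
      ∀ a b, a ≠ b → IsEmpty (↥(N a) ≃ₗ[A] ↥(N b))

/-- The setoid identifying isomorphic modules (among those with property `P`). -/
def isoSetoid (A : Type) [Ring A] (P : ModuleCat.{0} A → Prop) :
    Setoid {M : ModuleCat.{0} A // P M} where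
  r M N := Nonempty (↥M.1 ≃ₗ[A] ↥N.1)
  iseqv := ⟨fun M => ⟨LinearEquiv.refl A ↥M.1⟩, fun ⟨e⟩ => ⟨e.symm⟩,
    fun ⟨e⟩ ⟨f⟩ => ⟨e.trans f⟩⟩

/-- The data exhibiting a ring `R` as a basic left Harada algebra:
a complete set `{e i j}` of orthogonal primitive idempotents with pairwise non-isomorphic
right ideals `(e i j)R` (`R` is basic), such that each `(e i 0)R` is an injective right
module, and `(e i j)R ≅ rad ((e i (j-1))R)` for `j ≥ 1`.  (Indices are shifted by one from
the paper: the paper's `e_{ij}` is `e i (j-1)` here.) -/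
structure HaradaData (R : Type) [Ring R] : Type where
  m : ℕ
  hm : 0 < m
  n : Fin m → ℕ
  hn : ∀ i, 0 < n i
  e : (i : Fin m) → Fin (n i) → R
  idem : ∀ i j, IsIdempotentElem (e i j)
  orth : ∀ p q : Σ i : Fin m, Fin (n i), p ≠ q → e p.1 p.2 * e q.1 q.2 = 0
  sum_eq_one : ∑ p : Σ i : Fin m, Fin (n i), e p.1 p.2 = 1
  indec : ∀ i j, IsIndecomposableMod Rᵐᵒᵖ ↥(rightIdeal R (e i j))
  basic : ∀ p q : Σ i : Fin m, Fin (n i), p ≠ q →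
    IsEmpty (↥(rightIdeal R (e p.1 p.2)) ≃ₗ[Rᵐᵒᵖ] ↥(rightIdeal R (e q.1 q.2)))
  inj : ∀ i, Module.Injective Rᵐᵒᵖ ↥(rightIdeal R (e i ⟨0, hn i⟩))
  rad_iso : ∀ (i : Fin m) (j : Fin (n i)), 0 < j.val →
    Nonempty (↥(rightIdeal R (e i j)) ≃ₗ[Rᵐᵒᵖ]
      ↥(radSub (rightIdeal R (e i ⟨j.val - 1, Nat.lt_of_le_of_lt (Nat.sub_le j.val 1) j.isLt⟩))))

variable {R : Type} [Ring R]

/-- `H.P i j = rad^j ((e i 0)R)`; this is the paper's `P_{i,j+1} = rad^j (e_{i1}R)`,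
a submodule of `R`. -/
def HaradaData.P (H : HaradaData R) (i : Fin H.m) (j : Fin (H.n i)) : Submodule Rᵐᵒᵖ R :=
  radSub^[j.val] (rightIdeal R (H.e i ⟨0, H.hn i⟩))

/-- The quotient module `P_{ik}/P_{il}` (for `l ≥ k` we have `H.P i l ≤ H.P i k`). -/
abbrev HaradaData.Quot (H : HaradaData R) (i : Fin H.m) (k l : Fin (H.n i)) : Type :=
  ↥(H.P i k) ⧸ Submodule.comap (H.P i k).subtype (H.P i l)

/-- The last index (the paper's `n_i`) in `Fin (H.n i)`. -/
def HaradaData.last (H : HaradaData R) (i : Fin H.m) : Fin (H.n i) :=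
  ⟨H.n i - 1, Nat.sub_lt (H.hn i) one_pos⟩

/-- The right ideal `I = ⊕_{i,j} rad^{n_i - j + 1}(e_{ij}R)` of the paper. -/
def HaradaData.I (H : HaradaData R) : Submodule Rᵐᵒᵖ R :=
  ⨆ p : Σ i : Fin H.m, Fin (H.n i),
    radSub^[H.n p.1 - p.2.val] (rightIdeal R (H.e p.1 p.2))

/-- The submodule `T·I` of a right module `T`, for `I` a right ideal of `R`. -/
def smulSub (I : Submodule Rᵐᵒᵖ R) (T : Type) [AddCommGroup T] [Module Rᵐᵒᵖ T] :
    Submodule Rᵐᵒᵖ T :=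
  Submodule.span Rᵐᵒᵖ {x : T | ∃ (t : T) (r : R), r ∈ I ∧ x = op r • t}

/-- Restriction of scalars along `π : R →+* S`, turning a right `S`-module into a right
`R`-module (type synonym). -/
@[nolint unusedArguments]
def RestrictRight {R S : Type} [Ring R] [Ring S] (_ : R →+* S) (N : Type) [AddCommGroup N]
    [Module Sᵐᵒᵖ N] : Type := N

instance {R S : Type} [Ring R] [Ring S] (π : R →+* S) (N : Type) [AddCommGroup N]
    [Module Sᵐᵒᵖ N] : AddCommGroup (RestrictRight π N) := inferInstanceAs (AddCommGroup N)

instance {R S : Type} [Ring R] [Ring S] (π : R →+* S) (N : Type) [AddCommGroup N]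
    [Module Sᵐᵒᵖ N] : Module Rᵐᵒᵖ (RestrictRight π N) := Module.compHom N (RingHom.op π)

/-!
Write `E = e_{i1}R`, `n = n_i` and index from `0`, so that the modules in question are `rad^t E`
with `t < n`. They are projective with local endomorphism rings, so every submodule of `E` is one
of them or lies in `rad^n E`. Hence a homomorphism from an indecomposable module to `E` either has
image in `rad^n E` or is an isomorphism onto some `rad^t E`.

Since `rad^k E` is projective, `Ext¹(rad^k E / rad^l E, rad^j E) = 0` means that every map
`rad^l E → rad^j E` extends to `rad^k E`. By injectivity of `E`, all maps between the `rad^t E` are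
restrictions of endomorphisms of `E`, which preserve every `rad^t E`. An endomorphism moving some
`rad^s E` into a smaller `rad^t E` cannot be injective, so its image lies in `rad^n E`. Therefore
every map extends if `j ≤ k` or `l < j`, while for `k < j ≤ l` the inclusion `rad^l E → rad^j E`
does not extend, not even modulo `rad^n E`.

Because `R` is basic, `E * I ⊆ rad^n E`. So over `R ⧸ I` the same criterion applies to
`rad^j E / rad^n E`, with extensions restricted to those whose middle term is annihilated by `I`,
and maps into `rad^j E / rad^n E` lift to `rad^j E` by projectivity.
-/

section Indecomposable

variable {A M M' : Type} [Ring A] [AddCommGroup M] [Module A M] [AddCommGroup M'] [Module A M']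

theorem IsIndecomposableMod.of_equiv (e : M ≃ₗ[A] M') (hM : IsIndecomposableMod A M) :
    IsIndecomposableMod A M' := by
  have := hM.1
  refine ⟨e.symm.toEquiv.nontrivial, fun N N' hNN' ↦ ?_⟩
  let o : Submodule A M' ≃o Submodule A M := Submodule.orderIsoMapComap e.symm
  exact (hM.2 _ _ (o.isCompl hNN')).imp (map_eq_bot_iff o).mp (map_eq_bot_iff o).mp

theorem IsIndecomposableMod.injective_of_surjective (hM : IsIndecomposableMod A M)
    [Module.Projective A M'] [Nontrivial M'] {f : M →ₗ[A] M'} (hf : Function.Surjective f) :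
    Function.Injective f := by
  obtain ⟨s, hs⟩ := Module.projective_lifting_property f LinearMap.id hf
  have hfs : ∀ y, f (s y) = y := LinearMap.congr_fun hs
  have hidem : IsIdempotentElem (s ∘ₗ f : Module.End A M) :=
    LinearMap.ext fun x ↦ congrArg s (hfs (f x))
  rcases hM.2 _ _ (LinearMap.IsIdempotentElem.isCompl hidem) with hrange | hker
  · obtain ⟨y, hy⟩ := exists_ne (0 : M')
    obtain ⟨x, rfl⟩ := hf y
    have hsf : s (f x) = 0 := LinearMap.congr_fun (LinearMap.range_eq_bot.mp hrange) x
    exact absurd (by rw [← hfs (f x), hsf, map_zero]) hy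
  · have hinj : Function.Injective (s ∘ f) := LinearMap.ker_eq_bot.mp hker
    exact hinj.of_comp

/-- Fitting's lemma. -/
theorem IsIndecomposableMod.isLocalRing_end [IsArtinian A M] [IsNoetherian A M]
    (hM : IsIndecomposableMod A M) : IsLocalRing (Module.End A M) := by
  have := hM.1
  refine .of_isUnit_or_isUnit_one_sub_self fun f ↦ ?_
  obtain ⟨n, hn⟩ := Filter.eventually_atTop.mp f.eventually_isCompl_ker_pow_range_pow
  rcases hM.2 _ _ (hn (n + 1) n.le_succ) with hker | hrange
  · have hinj : Function.Injective (f ^ (n + 1)) := LinearMap.ker_eq_bot.mp hker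
    have hbij := IsArtinian.bijective_of_injective_endomorphism _ hinj
    exact .inl (isUnit_pow_succ_iff.mp ((Module.End.isUnit_iff _).mpr hbij))
  · exact .inr (IsNilpotent.isUnit_one_sub ⟨n + 1, LinearMap.range_eq_bot.mp hrange⟩)

end Indecomposable

theorem eq_top_of_isUnit_subtype_comp {A M : Type*} [Ring A] [AddCommGroup M] [Module A M]
    {N : Submodule A M} {f : M →ₗ[A] N} (hf : IsUnit (N.subtype ∘ₗ f : Module.End A M)) :
    N = ⊤ := by
  refine eq_top_iff.mpr fun x _ ↦ ?_
  obtain ⟨y, rfl⟩ := ((Module.End.isUnit_iff _).mp hf).2 x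
  exact (f y).2

theorem le_jacobson_of_ne_top {A M : Type*} [Ring A] [AddCommGroup M] [Module A M]
    [Module.Projective A M] [IsLocalRing (Module.End A M)] {N : Submodule A M} (hN : N ≠ ⊤) :
    N ≤ Module.jacobson A M := by
  refine le_sInf fun Q hQ ↦ ?_
  by_contra hNQ
  have hsup : N ⊔ Q = ⊤ := hQ.2 _ (right_lt_sup.mpr hNQ)
  have hsurj : Function.Surjective (N.subtype.coprod Q.subtype) := by
    rw [← LinearMap.range_eq_top, LinearMap.range_coprod, Submodule.range_subtype,
      Submodule.range_subtype, hsup]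
  -- A section of `N × Q → M` writes the identity as a sum of endomorphisms into `N` and `Q`.
  obtain ⟨s, hs⟩ := Module.projective_lifting_property _ LinearMap.id hsurj
  have hadd : (N.subtype ∘ₗ LinearMap.fst A N Q ∘ₗ s : Module.End A M) +
      Q.subtype ∘ₗ LinearMap.snd A N Q ∘ₗ s = 1 := hs
  rcases IsLocalRing.isUnit_or_isUnit_of_add_one hadd with hunit | hunit
  · exact hN (eq_top_of_isUnit_subtype_comp hunit)
  · exact hQ.1 (eq_top_of_isUnit_subtype_comp hunit)

section Radical

variable {A M M' : Type} [Ring A] [AddCommGroup M] [Module A M] [AddCommGroup M'] [Module A M']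

theorem radSub_le (N : Submodule A M) : radSub N ≤ N := Submodule.map_subtype_le _ _

theorem coe_mem_radSub {N : Submodule A M} {x : N} :
    (x : M) ∈ radSub N ↔ x ∈ Module.jacobson A N :=
  N.injective_subtype.mem_set_image

theorem radSub_iterate_antitone (N : Submodule A M) : Antitone fun t ↦ radSub^[t] N :=
  antitone_nat_of_succ_le fun t ↦ by
    rw [Function.iterate_succ_apply']
    exact radSub_le _

theorem map_mem_radSub_iterate (t : ℕ) {N : Submodule A M} {N' : Submodule A M'}
    (f : N →ₗ[A] N') {x : N} (hx : (x : M) ∈ radSub^[t] N) : (f x : M') ∈ radSub^[t] N' := by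
  induction t generalizing N N' with
  | zero => exact (f x).2
  | succ t ih =>
    have hf : ∀ y : radSub N, (f (Submodule.inclusion (radSub_le N) y) : M') ∈ radSub N' :=
      fun y ↦ coe_mem_radSub.mpr (Module.le_comap_jacobson f (coe_mem_radSub.mp y.2))
    exact ih ((N'.subtype ∘ₗ f ∘ₗ Submodule.inclusion (radSub_le N)).codRestrict _ hf)
      (x := ⟨x, radSub_iterate_antitone (radSub N) (Nat.zero_le t) hx⟩) hx

theorem nonempty_radSub_equiv {N : Submodule A M} {N' : Submodule A M'} (e : N ≃ₗ[A] N') :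
    Nonempty (radSub N ≃ₗ[A] radSub N') :=
  have hmap : (Module.jacobson A N).map (e : N →ₗ[A] N') = Module.jacobson A N' :=
    Module.map_jacobson_of_bijective e.bijective
  ⟨(N.equivSubtypeMap _).symm ≪≫ₗ e.submoduleMap _ ≪≫ₗ LinearEquiv.ofEq _ _ hmap ≪≫ₗ
    N'.equivSubtypeMap _⟩

theorem radSub_lt (N : Submodule A M) [Nontrivial N] [Module.Finite A N] : radSub N < N := by
  refine (radSub_le N).lt_of_not_ge fun hle ↦ (Module.jacobson_lt_top A N).ne ?_
  exact eq_top_iff.mpr fun x _ ↦ coe_mem_radSub.mp (hle x.2)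

theorem eq_or_le_radSub [IsArtinian A M] [IsNoetherian A M] {P N : Submodule A M}
    [Module.Projective A P] (hP : IsIndecomposableMod A P) (hNP : N ≤ P) :
    N = P ∨ N ≤ radSub P := by
  have := hP.isLocalRing_end
  by_cases htop : N.comap P.subtype = ⊤
  · exact .inl (hNP.antisymm (Submodule.comap_subtype_eq_top.mp htop))
  · exact .inr fun x hx ↦ coe_mem_radSub.mpr (le_jacobson_of_ne_top htop
      (show (⟨x, hNP hx⟩ : P) ∈ N.comap P.subtype from hx))

end Radical

section Factorization

variable {A L M N : Type*} [Ring A] [AddCommGroup L] [Module A L] [AddCommGroup M] [Module A M]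
  [AddCommGroup N] [Module A N]

theorem exists_comp_eq_of_range_le {i : N →ₗ[A] M} (hi : Function.Injective i) (g : L →ₗ[A] M)
    (hg : LinearMap.range g ≤ LinearMap.range i) : ∃ f : L →ₗ[A] N, i ∘ₗ f = g := by
  let e := LinearEquiv.ofInjective i hi
  refine ⟨e.symm ∘ₗ g.codRestrict _ fun x ↦ hg ⟨x, rfl⟩, LinearMap.ext fun x ↦ ?_⟩
  exact congrArg Subtype.val (e.apply_symm_apply _)

theorem exists_comp_eq_of_ker_le {q : L →ₗ[A] M} (hq : Function.Surjective q) (g : L →ₗ[A] N)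
    (hg : LinearMap.ker q ≤ LinearMap.ker g) : ∃ f : M →ₗ[A] N, f ∘ₗ q = g := by
  let e := q.quotKerEquivOfSurjective hq
  refine ⟨(LinearMap.ker q).liftQ g hg ∘ₗ e.symm, LinearMap.ext fun x ↦ ?_⟩
  have he : e.symm (q x) = (LinearMap.ker q).mkQ x := (LinearEquiv.symm_apply_eq e).mpr rfl
  rw [LinearMap.comp_apply, LinearMap.comp_apply, LinearEquiv.coe_coe, he]
  exact Submodule.liftQ_apply _ _ _

end Factorization

theorem exists_extension_of_injective {A M E : Type} [Ring A] [AddCommGroup M]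
    [Module A M] [AddCommGroup E] [Module A E] (hE : Module.Injective A E) {N N' : Submodule A M}
    (hN : N ≤ N') (f : N →ₗ[A] E) : ∃ g : N' →ₗ[A] E, ∀ x : N, g ⟨x, hN x.2⟩ = f x :=
  hE.out (Submodule.inclusion hN) (Submodule.inclusion_injective hN) f

section Extension

variable {A M M' N N' : Type} [Ring A] [AddCommGroup M] [Module A M] [AddCommGroup M']
  [Module A M'] [AddCommGroup N] [Module A N] [AddCommGroup N'] [Module A N']

/-- Every extension of `M` by `N` whose middle term is annihilated by `J` splits. When `J` is a
two-sided ideal and `M`, `N` are modules over `A ⧸ J`, this says `Ext¹_{A/J}(M, N) = 0` without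
mentioning the ring `A ⧸ J`; for `J = ∅` it is `Ext1Zero A M N`. -/
def AnnihilatedExt1Zero (J : Set A) (M N : Type) [AddCommGroup M] [Module A M]
    [AddCommGroup N] [Module A N] : Prop :=
  ∀ (E : ModuleCat.{0} A) (i : N →ₗ[A] E) (p : E →ₗ[A] M), Module.IsTorsionBySet A E J →
    Function.Injective i → Function.Surjective p → LinearMap.range i = LinearMap.ker p →
    ∃ s : M →ₗ[A] E, p ∘ₗ s = LinearMap.id

theorem isTorsionBySet_empty : Module.IsTorsionBySet A M ∅ := fun _ a ↦ a.2.elim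

theorem annihilatedExt1Zero_empty : AnnihilatedExt1Zero (∅ : Set A) M N ↔ Ext1Zero A M N :=
  ⟨fun h E i p ↦ h E i p isTorsionBySet_empty, fun h E i p _ ↦ h E i p⟩

theorem AnnihilatedExt1Zero.of_equiv {J : Set A} (h : AnnihilatedExt1Zero J M N)
    (eM : M ≃ₗ[A] M') (eN : N ≃ₗ[A] N') : AnnihilatedExt1Zero J M' N' := by
  intro E i p hE hi hp hip
  have hexact : LinearMap.range (i ∘ₗ (eN : N →ₗ[A] N')) =
      LinearMap.ker ((eM.symm : M' →ₗ[A] M) ∘ₗ p) := by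
    rw [LinearEquiv.ker_comp, LinearMap.range_comp_of_range_eq_top _ eN.range, hip]
  obtain ⟨s, hs⟩ := h E _ _ hE (hi.comp eN.injective) (eM.symm.surjective.comp hp) hexact
  refine ⟨s ∘ₗ eM.symm, LinearMap.ext fun x ↦ eM.symm.injective ?_⟩
  exact LinearMap.congr_fun hs (eM.symm x)

theorem annihilatedExt1Zero_congr {J : Set A} (eM : M ≃ₗ[A] M') (eN : N ≃ₗ[A] N') :
    AnnihilatedExt1Zero J M N ↔ AnnihilatedExt1Zero J M' N' :=
  ⟨fun h ↦ h.of_equiv eM eN, fun h ↦ h.of_equiv eM.symm eN.symm⟩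

end Extension

section Presentation

variable {A L Q X N : Type} [Ring A] [AddCommGroup L] [Module A L] [AddCommGroup Q] [Module A Q]
  [AddCommGroup X] [Module A X] [AddCommGroup N] [Module A N] {ι : L →ₗ[A] Q} {q : Q →ₗ[A] X}

theorem exists_pushout_extension (hι : Function.Injective ι) (hq : Function.Surjective q)
    (hιq : LinearMap.range ι = LinearMap.ker q) (f : L →ₗ[A] N) :
    ∃ (E : ModuleCat.{0} A) (i : N →ₗ[A] E) (p : E →ₗ[A] X) (g : Q →ₗ[A] E),
      Function.Injective i ∧ Function.Surjective p ∧ LinearMap.range i = LinearMap.ker p ∧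
      p ∘ₗ g = q ∧ g ∘ₗ ι = i ∘ₗ f ∧ ∀ z, ∃ n x, z = i n + g x := by
  let D := LinearMap.range (f.prod (-ι))
  have hqι : ∀ y, q (ι y) = 0 := fun y ↦ hιq.le ⟨y, rfl⟩
  have hD : D ≤ LinearMap.ker (q ∘ₗ LinearMap.snd A N Q) := by
    rintro _ ⟨y, rfl⟩
    simp [hqι]
  have hz : ∀ z : (N × Q) ⧸ D, ∃ n x,
      z = (D.mkQ ∘ₗ LinearMap.inl A N Q) n + (D.mkQ ∘ₗ LinearMap.inr A N Q) x := fun z ↦ by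
    obtain ⟨⟨n, x⟩, rfl⟩ := D.mkQ_surjective z
    exact ⟨n, x, congrArg D.mkQ (by simp)⟩
  have hglue : (D.mkQ ∘ₗ LinearMap.inr A N Q) ∘ₗ ι = (D.mkQ ∘ₗ LinearMap.inl A N Q) ∘ₗ f := by
    refine LinearMap.ext fun y ↦ ((Submodule.Quotient.eq D).mpr ⟨y, ?_⟩).symm
    simp
  refine ⟨ModuleCat.of A ((N × Q) ⧸ D), D.mkQ ∘ₗ LinearMap.inl A N Q, D.liftQ _ hD,
    D.mkQ ∘ₗ LinearMap.inr A N Q, ?_, ?_, ?_, rfl, hglue, hz⟩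
  · refine (injective_iff_map_eq_zero _).mpr fun n hn ↦ ?_
    obtain ⟨y, hy⟩ := (Submodule.Quotient.mk_eq_zero D).mp hn
    have hy0 : y = 0 := hι (by simpa using congrArg Prod.snd hy)
    simpa [hy0] using (congrArg Prod.fst hy).symm
  · intro x
    obtain ⟨z, rfl⟩ := hq x
    exact ⟨D.mkQ (0, z), rfl⟩
  · refine le_antisymm ?_ fun z hzker ↦ ?_
    · rintro _ ⟨n, rfl⟩
      exact map_zero q
    · obtain ⟨n, x, rfl⟩ := hz z
      have hx : q x = 0 := by simpa using hzker
      obtain ⟨y, rfl⟩ := hιq.ge hx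
      exact ⟨n + f y, by rw [map_add]; exact congrArg _ (LinearMap.congr_fun hglue y).symm⟩

theorem exists_comp_eq_of_annihilatedExt1Zero {J : Set A} (hι : Function.Injective ι)
    (hq : Function.Surjective q) (hιq : LinearMap.range ι = LinearMap.ker q)
    (hX : Module.IsTorsionBySet A X J) (hN : Module.IsTorsionBySet A N J)
    (h : AnnihilatedExt1Zero J X N) {f : L →ₗ[A] N}
    (hf : ∀ a ∈ J, ∀ x y, ι y = a • x → f y = 0) : ∃ F : Q →ₗ[A] N, F ∘ₗ ι = f := by
  obtain ⟨E, i, p, g, hi, hp, hip, -, hgι, hz⟩ := exists_pushout_extension hι hq hιq f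
  have hE : Module.IsTorsionBySet A E J := by
    intro z a
    obtain ⟨n, x, rfl⟩ := hz z
    obtain ⟨y, hy⟩ := hιq.ge (show q (a.1 • x) = 0 by rw [map_smul]; exact hX (a := a))
    have hax : g (a.1 • x) = 0 := by
      rw [← hy]
      exact (LinearMap.congr_fun hgι y).trans ((congrArg i (hf a a.2 x y hy)).trans (map_zero i))
    rw [smul_add, ← map_smul, ← map_smul, hax, hN (a := a), map_zero, add_zero]
  have hexact : Function.Exact i p := LinearMap.exact_iff.mpr hip.symm
  obtain ⟨r, hr⟩ := ((hexact.split_tfae hi hp).out 0 1).mp (h E i p hE hi hp hip)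
  exact ⟨r ∘ₗ g, by rw [LinearMap.comp_assoc, hgι, ← LinearMap.comp_assoc, hr, LinearMap.id_comp]⟩

theorem annihilatedExt1Zero_of_exists_comp_eq {J : Set A} [Module.Projective A Q]
    (hq : Function.Surjective q) (hιq : LinearMap.range ι = LinearMap.ker q)
    (h : ∀ f : L →ₗ[A] N, (∀ a ∈ J, ∀ x y, ι y = a • x → f y = 0) →
      ∃ F : Q →ₗ[A] N, F ∘ₗ ι = f) : AnnihilatedExt1Zero J X N := by
  intro E i p hE hi hp hip
  obtain ⟨φ, rfl⟩ := Module.projective_lifting_property p q hp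
  obtain ⟨f, hf⟩ := exists_comp_eq_of_range_le hi (φ ∘ₗ ι) (by
    rintro _ ⟨y, rfl⟩
    exact hip.ge (hιq.le ⟨y, rfl⟩))
  obtain ⟨F, hF⟩ := h f fun a ha x y hy ↦ hi (by
    have : i (f y) = φ (ι y) := LinearMap.congr_fun hf y
    rw [this, hy, map_smul, map_zero]
    exact hE (a := ⟨a, ha⟩))
  obtain ⟨s, hs⟩ := exists_comp_eq_of_ker_le hq (φ - i ∘ₗ F) (by
    rw [← hιq]
    rintro _ ⟨y, rfl⟩
    rw [LinearMap.mem_ker, ← LinearMap.comp_apply, LinearMap.sub_comp, LinearMap.comp_assoc, hF,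
      hf, sub_self, LinearMap.zero_apply])
  refine ⟨s, LinearMap.ext fun x ↦ ?_⟩
  obtain ⟨z, rfl⟩ := hq x
  have hpi : p (i (F z)) = 0 := hip.le ⟨F z, rfl⟩
  have hsz : s (p (φ z)) = φ z - i (F z) := LinearMap.congr_fun hs z
  simp [hsz, hpi]

theorem annihilatedExt1Zero_iff_forall_exists_comp_eq {J : Set A} [Module.Projective A Q]
    (hι : Function.Injective ι) (hq : Function.Surjective q)
    (hιq : LinearMap.range ι = LinearMap.ker q)
    (hX : Module.IsTorsionBySet A X J) (hN : Module.IsTorsionBySet A N J) :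
    AnnihilatedExt1Zero J X N ↔ ∀ f : L →ₗ[A] N,
      (∀ a ∈ J, ∀ x y, ι y = a • x → f y = 0) → ∃ F : Q →ₗ[A] N, F ∘ₗ ι = f :=
  ⟨fun h _ hf ↦ exists_comp_eq_of_annihilatedExt1Zero hι hq hιq hX hN h hf,
    annihilatedExt1Zero_of_exists_comp_eq hq hιq⟩

theorem ext1Zero_iff_forall_exists_comp_eq [Module.Projective A Q] (hι : Function.Injective ι)
    (hq : Function.Surjective q) (hιq : LinearMap.range ι = LinearMap.ker q) :
    Ext1Zero A X N ↔ ∀ f : L →ₗ[A] N, ∃ F : Q →ₗ[A] N, F ∘ₗ ι = f := by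
  rw [← annihilatedExt1Zero_empty,
    annihilatedExt1Zero_iff_forall_exists_comp_eq hι hq hιq isTorsionBySet_empty
      isTorsionBySet_empty]
  exact forall_congr' fun f ↦ by simp

end Presentation

section ChangeOfRings

variable {R S : Type} [Ring R] [Ring S] {π : R →+* S}

/-- Along a surjection of rings the `S`-linear and the `R`-linear maps between right
`S`-modules are the same; the underlying functions are unchanged. Transports extensions
between the two rings. -/
def RestrictRight.homEquiv (hπ : Function.Surjective π) (M N : Type) [AddCommGroup M]
    [Module Sᵐᵒᵖ M] [AddCommGroup N] [Module Sᵐᵒᵖ N] :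
    (M →ₗ[Sᵐᵒᵖ] N) ≃ (RestrictRight π M →ₗ[Rᵐᵒᵖ] RestrictRight π N) where
  toFun f := { toFun := f, map_add' := f.map_add, map_smul' := fun r ↦ f.map_smul (op (π r.unop)) }
  invFun f :=
    { toFun := f
      map_add' := f.map_add
      map_smul' := fun s x ↦ by
        obtain ⟨r, hr⟩ := hπ s.unop
        obtain rfl : op (π r) = s := congrArg op hr
        exact f.map_smul (op r) x }

theorem exists_restrictRight_equiv (hπ : Function.Surjective π) {M : Type} [AddCommGroup M]
    [Module Rᵐᵒᵖ M] (hM : Module.IsTorsionBySet Rᵐᵒᵖ M (RingHom.ker (RingHom.op π))) :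
    ∃ E : ModuleCat.{0} Sᵐᵒᵖ, Nonempty (RestrictRight π E ≃ₗ[Rᵐᵒᵖ] M) := by
  have hop : Function.Surjective (RingHom.op π) := fun s ↦
    (hπ s.unop).imp' op fun _ hr ↦ congrArg op hr
  let action : Rᵐᵒᵖ →+* AddMonoid.End M := Module.toAddMonoidEnd Rᵐᵒᵖ M
  have haction : RingHom.ker (RingHom.op π) ≤ RingHom.ker action := fun r hr ↦
    AddMonoidHom.ext fun x ↦ hM (a := ⟨r, hr⟩)
  let lifted := (RingHom.op π).liftOfSurjective hop ⟨action, haction⟩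
  let _ : Module Sᵐᵒᵖ M := Module.compHom M lifted
  refine ⟨ModuleCat.of Sᵐᵒᵖ M, ⟨{ AddEquiv.refl M with map_smul' := fun r x ↦ ?_ }⟩⟩
  have hr : lifted (RingHom.op π r) = action r :=
    RingHom.liftOfSurjective_comp_apply (RingHom.op π) hop ⟨action, haction⟩ r
  exact DFunLike.congr_fun hr x

theorem ext1Zero_iff_annihilatedExt1Zero_restrictRight (hπ : Function.Surjective π) {X Y : Type}
    [AddCommGroup X] [Module Sᵐᵒᵖ X] [AddCommGroup Y] [Module Sᵐᵒᵖ Y] :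
    Ext1Zero Sᵐᵒᵖ X Y ↔ AnnihilatedExt1Zero (RingHom.ker (RingHom.op π) : Set Rᵐᵒᵖ)
      (RestrictRight π X) (RestrictRight π Y) := by
  constructor
  · intro h E i p hE hi hp hip
    obtain ⟨E', ⟨ε⟩⟩ := exists_restrictRight_equiv hπ hE
    have hexact : LinearMap.range (ε.symm.toLinearMap ∘ₗ i) =
        LinearMap.ker (p ∘ₗ ε.toLinearMap) := by
      rw [LinearMap.range_comp, hip, LinearMap.ker_comp]
      exact Submodule.map_equiv_eq_comap_symm ε.symm _
    obtain ⟨s, hs⟩ := h E' ((RestrictRight.homEquiv hπ Y E').symm (ε.symm ∘ₗ i))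
      ((RestrictRight.homEquiv hπ E' X).symm (p ∘ₗ ε)) (ε.symm.injective.comp hi)
      (hp.comp ε.surjective) (SetLike.coe_injective (congrArg SetLike.coe hexact :))
    exact ⟨ε.toLinearMap ∘ₗ RestrictRight.homEquiv hπ X E' s,
      LinearMap.ext fun x ↦ LinearMap.congr_fun hs x⟩
  · intro h E i p hi hp hip
    have hE : Module.IsTorsionBySet Rᵐᵒᵖ (RestrictRight π E) (RingHom.ker (RingHom.op π)) :=
      fun x r ↦ (congrArg (fun s : Sᵐᵒᵖ ↦ s • (show E from x)) r.2).trans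
        (zero_smul Sᵐᵒᵖ (show E from x))
    obtain ⟨s, hs⟩ := h (ModuleCat.of Rᵐᵒᵖ (RestrictRight π E)) (RestrictRight.homEquiv hπ Y E i)
      (RestrictRight.homEquiv hπ E X p) hE hi hp
      (SetLike.coe_injective (congrArg SetLike.coe hip :))
    exact ⟨(RestrictRight.homEquiv hπ X E).symm s, LinearMap.ext fun x ↦ LinearMap.congr_fun hs x⟩

end ChangeOfRings

theorem isTorsionBySet_radSub_iterate_quotient {A M : Type} [Ring A] [AddCommGroup M] [Module A M]
    {E : Submodule A M} {n : ℕ} {J : Set A} (hJ : ∀ a ∈ J, ∀ x ∈ E, a • x ∈ radSub^[n] E) (s : ℕ)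
    {t : ℕ} (ht : t ≤ n) : Module.IsTorsionBySet A
      (↥(radSub^[s] E) ⧸ (radSub^[t] E).comap (radSub^[s] E).subtype) J :=
  (Module.isTorsionBySet_quotient_iff _ _).mpr fun x a ha ↦
    radSub_iterate_antitone E ht (hJ a ha x (radSub_iterate_antitone E s.zero_le x.2))

/-- The properties of `E = e_{i1}R` on which the theorem rests, for a submodule `E` of any module:
`E` is injective and its first `n` radicals `rad^t E`, `t < n`, are indecomposable projective. -/
structure IsHaradaChain {A M : Type} [Ring A] [AddCommGroup M] [Module A M] (E : Submodule A M)
    (n : ℕ) : Prop where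
  injective : Module.Injective A E
  projective : ∀ t < n, Module.Projective A ↥(radSub^[t] E)
  indecomposable : ∀ t < n, IsIndecomposableMod A ↥(radSub^[t] E)

namespace IsHaradaChain

variable {A M : Type} [Ring A] [AddCommGroup M] [Module A M] {E : Submodule A M} {n : ℕ}

theorem not_radSub_iterate_le [IsNoetherian A M] (hE : IsHaradaChain E n) {s t : ℕ} (hst : s < t)
    (hs : s < n) : ¬ radSub^[s] E ≤ radSub^[t] E := by
  have := (hE.indecomposable s hs).1
  have hlt : radSub^[s + 1] E < radSub^[s] E := by
    rw [Function.iterate_succ_apply']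
    exact radSub_lt _
  exact ((radSub_iterate_antitone E hst).trans_lt hlt).not_ge

section FiniteLength

variable [IsArtinian A M] [IsNoetherian A M]

theorem le_or_exists_eq_radSub_iterate (hE : IsHaradaChain E n) {N : Submodule A M}
    (hN : N ≤ E) : N ≤ radSub^[n] E ∨ ∃ s < n, N = radSub^[s] E := by
  suffices ∀ t ≤ n, N ≤ radSub^[t] E ∨ ∃ s < t, N = radSub^[s] E from this n le_rfl
  intro t
  induction t with
  | zero => exact fun _ ↦ .inl hN
  | succ t ih =>
    intro ht
    rcases ih (by lia) with hle | ⟨s, hst, rfl⟩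
    · have := hE.projective t ht
      rw [Function.iterate_succ_apply']
      exact (eq_or_le_radSub (hE.indecomposable t ht) hle).symm.imp_right
        fun heq ↦ ⟨t, t.lt_succ_self, heq⟩
    · exact .inr ⟨s, by lia, rfl⟩

theorem forall_mem_radSub_iterate_or_exists_equiv (hE : IsHaradaChain E n) {N : Type}
    [AddCommGroup N] [Module A N] (hN : IsIndecomposableMod A N) (f : N →ₗ[A] E) :
    (∀ x, (f x : M) ∈ radSub^[n] E) ∨
      ∃ s < n, ∃ e : N ≃ₗ[A] ↥(radSub^[s] E), ∀ x, (e x : M) = f x := by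
  have hrange : LinearMap.range (E.subtype ∘ₗ f) ≤ E := by
    rintro _ ⟨x, rfl⟩
    exact (f x).2
  rcases hE.le_or_exists_eq_radSub_iterate hrange with hle | ⟨s, hs, heq⟩
  · exact .inl fun x ↦ hle ⟨x, rfl⟩
  · have := hE.projective s hs
    have := (hE.indecomposable s hs).1
    let f' : N →ₗ[A] ↥(radSub^[s] E) := (E.subtype ∘ₗ f).codRestrict _ fun x ↦ heq.le ⟨x, rfl⟩
    have hsurj : Function.Surjective f' := fun y ↦
      (heq.ge y.2).imp fun _ hx ↦ Subtype.ext hx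
    exact .inr ⟨s, hs, .ofBijective f' ⟨hN.injective_of_surjective hsurj, hsurj⟩, fun _ ↦ rfl⟩

theorem apply_mem_radSub_iterate_of_shift (hE : IsHaradaChain E n) {s t : ℕ} (hst : s < t)
    (hs : s < n) {g : E →ₗ[A] E}
    (hg : ∀ x : E, (x : M) ∈ radSub^[s] E → (g x : M) ∈ radSub^[t] E) (x : E) :
    (g x : M) ∈ radSub^[n] E := by
  have hind : IsIndecomposableMod A E := hE.indecomposable 0 (by lia)
  rcases hE.forall_mem_radSub_iterate_or_exists_equiv hind g with hmem | ⟨r, -, e, he⟩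
  · exact hmem x
  -- `g` embeds `E` into `rad^r E`, so by injectivity of `E` it has a left inverse `E → E`, which
  -- preserves `rad^t E`.
  · have hr : radSub^[r] E ≤ E := radSub_iterate_antitone E r.zero_le
    obtain ⟨h, hh⟩ := exists_extension_of_injective hE.injective hr e.symm.toLinearMap
    have hleft (y : E) : h (g y) = y :=
      calc h (g y) = h ⟨e y, hr (e y).2⟩ := congrArg h (Subtype.ext (he y).symm)
        _ = e.symm (e y) := hh (e y)
        _ = y := e.symm_apply_apply y
    refine absurd (fun y hy ↦ ?_) (hE.not_radSub_iterate_le hst hs)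
    have hyE : y ∈ E := radSub_iterate_antitone E s.zero_le hy
    simpa only [hleft] using map_mem_radSub_iterate t h (hg ⟨y, hyE⟩ hy)

theorem exists_comp_inclusion_eq (hE : IsHaradaChain E n) {j k l : ℕ} (hkl : k ≤ l) (hl : l < n)
    (hj : j ≤ n) (hjkl : j ≤ k ∨ l < j) (f : ↥(radSub^[l] E) →ₗ[A] ↥(radSub^[j] E)) :
    ∃ F : ↥(radSub^[k] E) →ₗ[A] ↥(radSub^[j] E),
      F ∘ₗ Submodule.inclusion (radSub_iterate_antitone E hkl) = f := by
  have hle (t : ℕ) : radSub^[t] E ≤ E := radSub_iterate_antitone E t.zero_le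
  obtain ⟨g, hg⟩ := exists_extension_of_injective hE.injective (hle l)
    (Submodule.inclusion (hle j) ∘ₗ f)
  have hgmem : ∀ x : ↥(radSub^[k] E), (g ⟨x, hle k x.2⟩ : M) ∈ radSub^[j] E := fun x ↦ by
    rcases hjkl with hjk | hlj
    · exact radSub_iterate_antitone E hjk (map_mem_radSub_iterate k g x.2)
    · refine radSub_iterate_antitone E hj ?_
      exact hE.apply_mem_radSub_iterate_of_shift hlj hl
        (fun y hy ↦ hg ⟨y, hy⟩ ▸ (f ⟨y, hy⟩).2) _
  refine ⟨(E.subtype ∘ₗ g ∘ₗ Submodule.inclusion (hle k)).codRestrict _ hgmem, ?_⟩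
  exact LinearMap.ext fun x ↦ Subtype.ext (congrArg (Subtype.val : E → M) (hg x))

theorem apply_mem_radSub_iterate_of_lt (hE : IsHaradaChain E n) {j k : ℕ} (hkj : k < j) (hk : k < n)
    (F : ↥(radSub^[k] E) →ₗ[A] ↥(radSub^[j] E)) (x : ↥(radSub^[k] E)) :
    (F x : M) ∈ radSub^[n] E := by
  have hle (t : ℕ) : radSub^[t] E ≤ E := radSub_iterate_antitone E t.zero_le
  obtain ⟨g, hg⟩ := exists_extension_of_injective hE.injective (hle k)
    (Submodule.inclusion (hle j) ∘ₗ F)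
  have hgF (y : ↥(radSub^[k] E)) : (g ⟨y, hle k y.2⟩ : M) = F y := congrArg Subtype.val (hg y)
  rw [← hgF]
  exact hE.apply_mem_radSub_iterate_of_shift hkj hk (fun y hy ↦ hgF ⟨y, hy⟩ ▸ (F ⟨y, hy⟩).2) _

theorem ext1Zero_iff (hE : IsHaradaChain E n) {j k l : ℕ} (hkl : k ≤ l) (hl : l < n)
    (hj : j ≤ n) :
    Ext1Zero A (↥(radSub^[k] E) ⧸ (radSub^[l] E).comap (radSub^[k] E).subtype)
      ↥(radSub^[j] E) ↔ j ≤ k ∨ l < j := by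
  have := hE.projective k (by lia)
  have hle := radSub_iterate_antitone E hkl
  rw [ext1Zero_iff_forall_exists_comp_eq (Submodule.inclusion_injective hle)
    (Submodule.mkQ_surjective _) (by rw [Submodule.range_inclusion, Submodule.ker_mkQ])]
  refine ⟨fun h ↦ ?_, fun hjkl f ↦ hE.exists_comp_inclusion_eq hkl hl hj hjkl f⟩
  by_contra! hlt
  obtain ⟨F, hF⟩ := h (Submodule.inclusion (radSub_iterate_antitone E hlt.2))
  refine hE.not_radSub_iterate_le hl hl fun x hx ↦ ?_
  have hFx : (F ⟨x, hle hx⟩ : M) = x := congrArg Subtype.val (LinearMap.congr_fun hF ⟨x, hx⟩)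
  exact hFx ▸ hE.apply_mem_radSub_iterate_of_lt hlt.1 (by lia) F _

theorem annihilatedExt1Zero_iff (hE : IsHaradaChain E n) {J : Set A}
    (hJ : ∀ a ∈ J, ∀ x ∈ E, a • x ∈ radSub^[n] E) {j k l : ℕ} (hkl : k ≤ l) (hl : l < n)
    (hj : j ≤ n) :
    AnnihilatedExt1Zero J (↥(radSub^[k] E) ⧸ (radSub^[l] E).comap (radSub^[k] E).subtype)
      (↥(radSub^[j] E) ⧸ (radSub^[n] E).comap (radSub^[j] E).subtype) ↔ j ≤ k ∨ l < j := by
  have := hE.projective k (by lia)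
  have := hE.projective l hl
  have hle := radSub_iterate_antitone E hkl
  rw [annihilatedExt1Zero_iff_forall_exists_comp_eq (Submodule.inclusion_injective hle)
    (Submodule.mkQ_surjective _) (by rw [Submodule.range_inclusion, Submodule.ker_mkQ])
    (isTorsionBySet_radSub_iterate_quotient hJ k hl.le)
    (isTorsionBySet_radSub_iterate_quotient hJ j le_rfl)]
  let T := (radSub^[n] E).comap (radSub^[j] E).subtype
  constructor
  · intro h
    by_contra! hlt
    have hlj := radSub_iterate_antitone E hlt.2
    obtain ⟨F, hF⟩ := h (T.mkQ ∘ₗ Submodule.inclusion hlj) fun a ha x y hy ↦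
      (Submodule.Quotient.mk_eq_zero T).mpr <| by
        have hyx : (y : M) = a • (x : M) := congrArg Subtype.val hy
        exact (hyx ▸ hJ a ha x (radSub_iterate_antitone E k.zero_le x.2) : (y : M) ∈ _)
    obtain ⟨F', rfl⟩ := Module.projective_lifting_property T.mkQ F T.mkQ_surjective
    refine hE.not_radSub_iterate_le hl hl fun x hx ↦ ?_
    have hFx : T.mkQ (F' ⟨x, hle hx⟩) = 0 :=
      (Submodule.Quotient.mk_eq_zero T).mpr (hE.apply_mem_radSub_iterate_of_lt hlt.1 (by lia) F' _)
    exact (Submodule.Quotient.mk_eq_zero T).mp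
      ((LinearMap.congr_fun hF ⟨x, hx⟩).symm.trans hFx)
  · intro hjkl f _
    obtain ⟨f', rfl⟩ := Module.projective_lifting_property T.mkQ f T.mkQ_surjective
    obtain ⟨F', rfl⟩ := hE.exists_comp_inclusion_eq hkl hl hj hjkl f'
    exact ⟨T.mkQ ∘ₗ F', rfl⟩

end FiniteLength

end IsHaradaChain

section RightIdeal

theorem mem_rightIdeal_iff_mul_eq {e : R} (he : IsIdempotentElem e) {x : R} :
    x ∈ rightIdeal R e ↔ e * x = x := by
  rw [rightIdeal, Submodule.mem_span_singleton]
  constructor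
  · rintro ⟨r, rfl⟩
    rw [mul_smul_comm, he.eq]
  · exact fun hx ↦ ⟨op x, hx⟩

theorem projective_rightIdeal {e : R} (he : IsIdempotentElem e) :
    Module.Projective Rᵐᵒᵖ (rightIdeal R e) := by
  have : Module.Projective Rᵐᵒᵖ R := .of_equiv (opLinearEquiv Rᵐᵒᵖ (M := R)).symm
  refine .of_split (rightIdeal R e).subtype ((LinearMap.mulLeft Rᵐᵒᵖ e).codRestrict _ fun x ↦ ?_) ?_
  · exact (mem_rightIdeal_iff_mul_eq he).mpr (by rw [LinearMap.mulLeft_apply, ← mul_assoc, he.eq])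
  · exact LinearMap.ext fun x ↦ Subtype.ext ((mem_rightIdeal_iff_mul_eq he).mp x.2)

end RightIdeal

namespace HaradaData

variable (H : HaradaData R)

/-- The injective right ideal `(e i 0)R` (the paper's `e_{i1}R`), so that `H.P i j` is by
definition `rad^j` of it. -/
def head (i : Fin H.m) : Submodule Rᵐᵒᵖ R := rightIdeal R (H.e i ⟨0, H.hn i⟩)

theorem radSub_P_last (i : Fin H.m) : radSub (H.P i (H.last i)) = radSub^[H.n i] (H.head i) := by
  have hlast : (H.last i : ℕ) + 1 = H.n i := Nat.sub_add_cancel (H.hn i)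
  rw [P, ← Function.iterate_succ_apply' radSub, Nat.succ_eq_add_one, hlast, head]

theorem nonempty_rightIdeal_equiv (i : Fin H.m) {t : ℕ} (ht : t < H.n i) :
    Nonempty (rightIdeal R (H.e i ⟨t, ht⟩) ≃ₗ[Rᵐᵒᵖ] ↥(radSub^[t] (H.head i))) := by
  induction t with
  | zero => exact ⟨LinearEquiv.refl _ _⟩
  | succ t ih =>
    obtain ⟨e⟩ := H.rad_iso i ⟨t + 1, ht⟩ t.succ_pos
    obtain ⟨e'⟩ := nonempty_radSub_equiv (ih (t.lt_succ_self.trans ht)).some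
    rw [Function.iterate_succ_apply']
    exact ⟨e.trans e'⟩

theorem isHaradaChain (i : Fin H.m) : IsHaradaChain (H.head i) (H.n i) where
  injective := H.inj i
  projective t ht :=
    have := projective_rightIdeal (H.idem i ⟨t, ht⟩)
    .of_equiv (H.nonempty_rightIdeal_equiv i ht).some
  indecomposable t ht := (H.indec i ⟨t, ht⟩).of_equiv (H.nonempty_rightIdeal_equiv i ht).some

theorem eq_of_radSub_iterate_equiv {p i : Fin H.m} {s t : ℕ} (hs : s < H.n p) (ht : t < H.n i)
    (e : ↥(radSub^[s] (H.head p)) ≃ₗ[Rᵐᵒᵖ] ↥(radSub^[t] (H.head i))) : p = i := by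
  by_contra hpi
  have hne : (⟨p, ⟨s, hs⟩⟩ : Σ i, Fin (H.n i)) ≠ ⟨i, ⟨t, ht⟩⟩ := fun h ↦ hpi (congrArg Sigma.fst h)
  exact (H.basic _ _ hne).false
    ((H.nonempty_rightIdeal_equiv p hs).some ≪≫ₗ e ≪≫ₗ (H.nonempty_rightIdeal_equiv i ht).some.symm)

section Artinian

variable [IsArtinian Rᵐᵒᵖ R] [IsNoetherian Rᵐᵒᵖ R]

theorem map_head_mem_radSub_iterate {p i : Fin H.m} (g : H.head p →ₗ[Rᵐᵒᵖ] H.head i) {x : H.head p}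
    (hx : (x : R) ∈ radSub^[H.n p] (H.head p)) : (g x : R) ∈ radSub^[H.n i] (H.head i) := by
  have hind : IsIndecomposableMod Rᵐᵒᵖ (H.head p) := H.indec p _
  rcases (H.isHaradaChain i).forall_mem_radSub_iterate_or_exists_equiv hind g with
    hmem | ⟨s, hs, e, -⟩
  · exact hmem x
  · obtain rfl := H.eq_of_radSub_iterate_equiv (H.hn p) hs e
    exact map_mem_radSub_iterate _ g hx

theorem map_rightIdeal_mem_radSub_iterate {p i : Fin H.m} {q : Fin (H.n p)}
    (f : rightIdeal R (H.e p q) →ₗ[Rᵐᵒᵖ] H.head i) {y : rightIdeal R (H.e p q)}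
    (hy : (y : R) ∈ radSub^[H.n p - q] (rightIdeal R (H.e p q))) :
    (f y : R) ∈ radSub^[H.n i] (H.head i) := by
  obtain ⟨e⟩ := H.nonempty_rightIdeal_equiv p q.2
  have hle : radSub^[(q : ℕ)] (H.head p) ≤ H.head p := radSub_iterate_antitone _ q.1.zero_le
  obtain ⟨g, hg⟩ := exists_extension_of_injective (H.inj i) hle (f ∘ₗ e.symm.toLinearMap)
  have hgy : g ⟨e y, hle (e y).2⟩ = f y := (hg (e y)).trans (congrArg f (e.symm_apply_apply y))
  have hey := map_mem_radSub_iterate _ e.toLinearMap hy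
  rw [← Function.iterate_add_apply, Nat.sub_add_cancel q.2.le] at hey
  exact hgy ▸ H.map_head_mem_radSub_iterate g hey

theorem mul_mem_radSub_iterate_of_mem_I {i : Fin H.m} {x r : R} (hx : x ∈ H.head i) (hr : r ∈ H.I) :
    x * r ∈ radSub^[H.n i] (H.head i) := by
  suffices H.I ≤ (radSub^[H.n i] (H.head i)).comap (LinearMap.mulLeft Rᵐᵒᵖ x) from this hr
  refine iSup_le fun ⟨p, q⟩ y hy ↦ ?_
  have hmul (z : rightIdeal R (H.e p q)) : x * (z : R) ∈ H.head i :=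
    (H.head i).smul_mem (op (z : R)) hx
  exact H.map_rightIdeal_mem_radSub_iterate
    ((LinearMap.mulLeft Rᵐᵒᵖ x ∘ₗ (rightIdeal R (H.e p q)).subtype).codRestrict _ hmul)
    (y := ⟨y, radSub_iterate_antitone _ (Nat.zero_le _) hy⟩) hy

end Artinian

end HaradaData

theorem statement16_general {R : Type} [Ring R] [IsArtinianRing Rᵐᵒᵖ] (H : HaradaData R)
    {S : Type} [Ring S] {π : R →+* S} (hsurj : Function.Surjective π)
    (hker : ∀ x : R, π x = 0 ↔ x ∈ H.I)
    (i : Fin H.m) (j k l : Fin (H.n i)) (hkl : k < l) :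
    (Ext1Zero Rᵐᵒᵖ (H.Quot i k l) ↥(H.P i j) ↔ (j ≤ k ∨ l < j)) ∧
    (∀ (X Y : ModuleCat.{0} Sᵐᵒᵖ),
      Nonempty (RestrictRight π ↥X ≃ₗ[Rᵐᵒᵖ] H.Quot i k l) →
      Nonempty (RestrictRight π ↥Y ≃ₗ[Rᵐᵒᵖ]
        (↥(H.P i j) ⧸ Submodule.comap (H.P i j).subtype (radSub (H.P i (H.last i))))) →
      (Ext1Zero Sᵐᵒᵖ ↥X ↥Y ↔ (j ≤ k ∨ l < j))) := by
  have : Module.Finite Rᵐᵒᵖ R := .equiv (opLinearEquiv Rᵐᵒᵖ (M := R)).symm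
  refine ⟨(H.isHaradaChain i).ext1Zero_iff hkl.le l.2 j.2.le, fun X Y ⟨eX⟩ ⟨eY⟩ ↦ ?_⟩
  have hJ : ∀ a ∈ (RingHom.ker (RingHom.op π) : Set Rᵐᵒᵖ), ∀ x ∈ H.head i,
      a • x ∈ radSub^[H.n i] (H.head i) := fun a ha x hx ↦
    H.mul_mem_radSub_iterate_of_mem_I hx ((hker _).mp (congrArg unop ha))
  rw [H.radSub_P_last] at eY
  rw [ext1Zero_iff_annihilatedExt1Zero_restrictRight hsurj, annihilatedExt1Zero_congr eX eY]
  exact (H.isHaradaChain i).annihilatedExt1Zero_iff hJ hkl.le l.2 j.2.le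

/-- Proposition 4.4(3) and its proof.  For `1 ≤ k < l ≤ n_i` and
`1 ≤ j ≤ n_i`, the following are equivalent: (a) `Ext¹_R(P_{ik}/P_{il}, P_{ij}) = 0`;
(b) `j ≤ k` or `l < j`; (c) `Ext¹_{R̄}(P_{ik}/P_{il}, P_{ij}/rad(P_{i n_i})) = 0`, where the
modules in (c) are regarded as right `R̄`-modules (`R̄ = R/I` is presented by a surjective
ring homomorphism `π : R → S` with kernel `I`). -/
theorem statement16 (K R : Type) [Field K] [IsAlgClosed K] [Ring R] [Algebra K R]
    [FiniteDimensional K R] (H : HaradaData R)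
    (S : Type) [Ring S] (π : R →+* S) (hsurj : Function.Surjective π)
    (hker : ∀ x : R, π x = 0 ↔ x ∈ H.I)
    (i : Fin H.m) (j k l : Fin (H.n i)) (hkl : k < l) :
    (Ext1Zero Rᵐᵒᵖ (H.Quot i k l) ↥(H.P i j) ↔ (j ≤ k ∨ l < j)) ∧
    (∀ (X Y : ModuleCat.{0} Sᵐᵒᵖ),
      Nonempty (RestrictRight π ↥X ≃ₗ[Rᵐᵒᵖ] H.Quot i k l) →
      Nonempty (RestrictRight π ↥Y ≃ₗ[Rᵐᵒᵖ]
        (↥(H.P i j) ⧸ Submodule.comap (H.P i j).subtype (radSub (H.P i (H.last i))))) →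
      (Ext1Zero Sᵐᵒᵖ ↥X ↥Y ↔ (j ≤ k ∨ l < j))) := by
  have : Module.Finite K Rᵐᵒᵖ := .equiv (opLinearEquiv K)
  have : IsArtinianRing Rᵐᵒᵖ := .of_finite K Rᵐᵒᵖ
  exact statement16_general H hsurj hker i j k l hkl
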